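/- If G ∈ F₄(F₂, 3K₂) or G ∈ F₄(F₂, P₃∨P₃), then |V(G)| ≤ 8. Here 3K₂ is the disjoint union of three edges (6 vertices) and P₃∨P₃ is the join of two copies of the path on 3 vertices. -/

import Mathlib

/-!
Both `H = 3K₂` and `H = P₃ ∨ P₃` have a graph matrix over `𝔽₂` of the form `[B B; B B]`, where `B`
is an invertible `3 × 3` matrix whose inverse has ones on the diagonal. A matrix of rank at most 3
is determined by the rows and the columns through an invertible `3 × 3` block; applied to the
off-diagonal block `B`, this shows that `[B B; B B]` is the only graph matrix of `H` of rank at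
most 3.

Hence a copy of `H` in `G` singles out one candidate for a graph matrix of `G` of rank at most 3,
and the `(i, j)` entry of the candidate is computed inside the copy together with `i` and `j`. If
`G` has more than `6 + 2` vertices, every pair `i, j` survives in some `G - v` with `v` outside the
copy. Since `mr(𝔽₂, G - v) ≤ 3`, the entry is the right one, so the candidate is a graph matrix of
`G` and `mr(𝔽₂, G) ≤ 3`.
-/

open Matrix

/-- `A` is a symmetric matrix over `F` whose off-diagonal nonzero pattern is
given by the graph `G` (diagonal entries are unconstrained). -/
def IsGraphMatrix (F : Type*) [Field F] {V : Type*} (G : SimpleGraph V)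
    (A : Matrix V V F) : Prop :=
  A.IsSymm ∧ ∀ i j : V, i ≠ j → (A i j ≠ 0 ↔ G.Adj i j)

/-- The minimum rank `mr(F, G)` of the graph `G` over the field `F`. -/
noncomputable def minRank (F : Type*) [Field F] {V : Type*} [Fintype V]
    (G : SimpleGraph V) : ℕ :=
  sInf {r : ℕ | ∃ A : Matrix V V F, IsGraphMatrix F G A ∧ A.rank = r}

/-- The graph `G - v` obtained from `G` by deleting the vertex `v`. -/
def deleteVert {V : Type*} (G : SimpleGraph V) (v : V) : SimpleGraph {u : V // u ≠ v} :=
  SimpleGraph.comap Subtype.val G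

/-- `G ∈ F_K(F, H)`: `G` contains `H` as an induced subgraph, `mr(F, G) ≥ K`, and for
some induced copy of `H` in `G` (an embedding `f : H ↪g G`), `mr(F, G - v) ≤ K - 1`
for every vertex `v` of `G` outside that copy. -/
def MemForbRel (F : Type*) [Field F] (K : ℕ) {VH VG : Type*} [Fintype VH] [Fintype VG]
    [DecidableEq VG] (H : SimpleGraph VH) (G : SimpleGraph VG) : Prop :=
  K ≤ minRank F G ∧
    ∃ f : H ↪g G, ∀ v : VG, v ∉ Set.range f → minRank F (deleteVert G v) + 1 ≤ K

/-- `3K₂`: the disjoint union of three edges, on vertices `{0, …, 5}`. -/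
def threeK2 : SimpleGraph (Fin 6) := SimpleGraph.fromEdgeSet {s(0,1), s(2,3), s(4,5)}

/-- `P₃ ∨ P₃`: the join of the two paths `0 - 1 - 2` and `3 - 4 - 5`. -/
def P3joinP3 : SimpleGraph (Fin 6) :=
  SimpleGraph.fromEdgeSet {s(0,1), s(1,2), s(3,4), s(4,5),
    s(0,3), s(0,4), s(0,5), s(1,3), s(1,4), s(1,5), s(2,3), s(2,4), s(2,5)}

section RankFactorization

variable {F l m n : Type*} [Field F] [Fintype n] [DecidableEq n]

theorem eq_mul_inv_mul_of_rank_le_card [Fintype m] (A : Matrix l m F) (s : n → l) (t : n → m)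
    (hst : IsUnit (A.submatrix s t)) (hA : A.rank ≤ Fintype.card n) :
    A = A.submatrix id t * (A.submatrix s t)⁻¹ * A.submatrix s id := by
  ext i j
  let _ : Invertible (A.submatrix s t) := hst.invertible
  have hborder : A.submatrix (Sum.elim s fun _ : Unit => i) (Sum.elim t fun _ : Unit => j) =
      fromBlocks (A.submatrix s t) (A.submatrix s fun _ => j) (A.submatrix (fun _ => i) t)
        (A.submatrix (fun _ => i) fun _ => j) := by
    ext (x | x) (y | y) <;> rfl
  have hsing : ¬IsUnit (A.submatrix (Sum.elim s fun _ : Unit => i)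
      (Sum.elim t fun _ : Unit => j)) := fun hunit => by
    have hle := rank_submatrix_le A (Sum.elim s fun _ : Unit => i) (Sum.elim t fun _ : Unit => j)
    rw [rank_of_isUnit _ hunit, Fintype.card_sum, Fintype.card_unit] at hle
    omega
  -- The Schur complement of the block is a singular `1 × 1` matrix.
  rw [hborder, isUnit_fromBlocks_iff_of_invertible₁₁, isUnit_iff_isUnit_det, det_unique,
    isUnit_iff_ne_zero, not_not, Matrix.sub_apply, sub_eq_zero, invOf_eq_nonsing_inv] at hsing
  exact hsing

theorem add_mul_inv_mul_add {R : Type*} [CommRing R] {B : Matrix n n R} (hB : IsUnit B)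
    (C D : Matrix n n R) : (B + C) * B⁻¹ * (B + D) = B + (D + (C + C * B⁻¹ * D)) := by
  have hdet : IsUnit B.det := (isUnit_iff_isUnit_det B).1 hB
  rw [add_mul, mul_nonsing_inv _ hdet, add_mul, one_mul, mul_add,
    nonsing_inv_mul_cancel_right _ _ hdet, add_assoc]

end RankFactorization

section GraphMatrix

variable {F : Type*} [Field F] {V W : Type*} {G : SimpleGraph V} {H : SimpleGraph W}

theorem isGraphMatrix_adjMatrix (G : SimpleGraph V) [DecidableRel G.Adj] :
    IsGraphMatrix F G (G.adjMatrix F) :=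
  ⟨G.isSymm_adjMatrix, fun i j _ => by simp [SimpleGraph.adjMatrix_apply]⟩

theorem IsGraphMatrix.submatrix {A : Matrix V V F} (hA : IsGraphMatrix F G A) (f : H ↪g G) :
    IsGraphMatrix F H (A.submatrix f f) :=
  ⟨hA.1.submatrix f, fun _ _ hij => (hA.2 _ _ (f.injective.ne hij)).trans f.map_adj_iff⟩

theorem IsGraphMatrix.apply_eq_apply {A A' : Matrix V V (ZMod 2)}
    (hA : IsGraphMatrix (ZMod 2) G A) (hA' : IsGraphMatrix (ZMod 2) G A') {i j : V} (hij : i ≠ j) :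
    A i j = A' i j := by
  have eq_of_ne_zero_iff : ∀ x y : ZMod 2, (x ≠ 0 ↔ y ≠ 0) → x = y := by decide
  exact eq_of_ne_zero_iff _ _ ((hA.2 i j hij).trans (hA'.2 i j hij).symm)

theorem IsGraphMatrix.exists_eq_add_diagonal [DecidableEq V] {A A' : Matrix V V (ZMod 2)}
    (hA : IsGraphMatrix (ZMod 2) G A) (hA' : IsGraphMatrix (ZMod 2) G A') :
    ∃ d : V → ZMod 2, A = A' + diagonal d := by
  refine ⟨fun i => A i i - A' i i, ?_⟩
  ext i j
  obtain rfl | hij := eq_or_ne i j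
  · simp
  · simp [hij, hA.apply_eq_apply hA' hij]

variable [Fintype V]

theorem minRank_le_rank {A : Matrix V V F} (hA : IsGraphMatrix F G A) : minRank F G ≤ A.rank :=
  Nat.sInf_le ⟨A, hA, rfl⟩

variable (F G) in
theorem exists_isGraphMatrix_rank_eq_minRank :
    ∃ A : Matrix V V F, IsGraphMatrix F G A ∧ A.rank = minRank F G := by
  classical
  exact Nat.sInf_mem (s := {r | ∃ A : Matrix V V F, IsGraphMatrix F G A ∧ A.rank = r})
    ⟨_, G.adjMatrix F, isGraphMatrix_adjMatrix G, rfl⟩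

end GraphMatrix

section DeleteVert

variable {F : Type*} [Field F] {V W : Type*} {G : SimpleGraph V} {H : SimpleGraph W}

theorem exists_embedding_deleteVert (f : H ↪g G) {v : V} (hv : v ∉ Set.range f) :
    ∃ g : H ↪g deleteVert G v, ∀ k, (g k : V) = f k :=
  ⟨{ toFun k := ⟨f k, fun hk => hv ⟨k, hk⟩⟩
     inj' _ _ hxy := f.injective (congrArg Subtype.val hxy)
     map_rel_iff' := f.map_adj_iff }, fun _ => rfl⟩

theorem isGraphMatrix_of_forall_exists_deleteVert {M : Matrix V V F}
    (hM : ∀ i j, ∃ v, i ≠ v ∧ j ≠ v ∧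
      IsGraphMatrix F (deleteVert G v) (M.submatrix Subtype.val Subtype.val)) :
    IsGraphMatrix F G M := by
  refine ⟨Matrix.IsSymm.ext fun i j => ?_, fun i j hij => ?_⟩ <;>
    obtain ⟨v, hi, hj, hv⟩ := hM i j
  · exact hv.1.apply ⟨i, hi⟩ ⟨j, hj⟩
  · exact hv.2 ⟨i, hi⟩ ⟨j, hj⟩ (Subtype.coe_ne_coe.1 hij)

theorem exists_notMem_range_ne_ne [Fintype V] [Fintype W] (f : W → V)
    (hcard : Fintype.card W + 2 < Fintype.card V) (i j : V) :
    ∃ v, v ∉ Set.range f ∧ i ≠ v ∧ j ≠ v := by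
  classical
  have hlt : (insert i (insert j (Finset.univ.image f))).card < (Finset.univ : Finset V).card :=
    calc (insert i (insert j (Finset.univ.image f))).card
        ≤ (Finset.univ.image f).card + 1 + 1 :=
          (Finset.card_insert_le _ _).trans (Nat.succ_le_succ (Finset.card_insert_le _ _))
      _ ≤ Fintype.card W + 2 := by grw [Finset.card_image_le, Finset.card_univ]
      _ < Finset.univ.card := hcard
  obtain ⟨v, -, hv⟩ := Finset.exists_mem_notMem_of_card_lt_card hlt
  exact ⟨v, by simp_all, by grind, by grind⟩

end DeleteVert

section RankCompletion

variable {F : Type*} [Field F] {V W n : Type*}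

open Classical in
/-- The columns indexed by `σ` of a graph matrix of `G` over `𝔽₂` whose principal block on `σ` is
`N`: only the diagonal entries are not given by `G`, and these are read off from `N`. -/
noncomputable def blockColumns (G : SimpleGraph V) (σ : n → V) (N : Matrix n n F) : Matrix V n F :=
  of fun i a => if i = σ a then N.diag a else G.adjMatrix F i (σ a)

theorem IsGraphMatrix.submatrix_id_eq_blockColumns {G : SimpleGraph V} {A : Matrix V V (ZMod 2)}
    (hA : IsGraphMatrix (ZMod 2) G A) (σ : n → V) :
    A.submatrix id σ = blockColumns G σ (A.submatrix σ σ) := by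
  classical
  ext i a
  obtain rfl | hi := eq_or_ne i (σ a)
  · simp [blockColumns]
  · simp [blockColumns, hi, hA.apply_eq_apply (isGraphMatrix_adjMatrix G) hi]

variable [Fintype n] [DecidableEq n]

/-- The only candidate for a graph matrix of `G` over `𝔽₂` with invertible principal block `N` on
`σ` and the same rank as `N`. -/
noncomputable def rankCompletion (G : SimpleGraph V) (σ : n → V) (N : Matrix n n F) :
    Matrix V V F :=
  blockColumns G σ N * N⁻¹ * (blockColumns G σ N)ᵀ

theorem rank_rankCompletion_le [Fintype V] (G : SimpleGraph V) (σ : n → V) (N : Matrix n n F) :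
    (rankCompletion G σ N).rank ≤ Fintype.card n :=
  (rank_mul_le_right _ _).trans (rank_le_card_height _)

theorem rankCompletion_submatrix {G : SimpleGraph V} {G' : SimpleGraph W} (e : G' ↪g G)
    (σ : n → W) (N : Matrix n n F) :
    (rankCompletion G (e ∘ σ) N).submatrix e e = rankCompletion G' σ N := by
  have hcol (x : W) (a : n) : blockColumns G (e ∘ σ) N (e x) a = blockColumns G' σ N x a := by
    classical simp [blockColumns, SimpleGraph.adjMatrix_apply, e.injective.eq_iff]
  ext x y
  simp only [rankCompletion, submatrix_apply, mul_apply, transpose_apply, hcol]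

theorem IsGraphMatrix.eq_rankCompletion [Fintype V] {G : SimpleGraph V}
    {A : Matrix V V (ZMod 2)} (hA : IsGraphMatrix (ZMod 2) G A) (σ : n → V)
    (hσ : IsUnit (A.submatrix σ σ)) (hrank : A.rank ≤ Fintype.card n) :
    A = rankCompletion G σ (A.submatrix σ σ) := by
  have hrow : A.submatrix σ id = (A.submatrix id σ)ᵀ := by rw [transpose_submatrix, hA.1]
  rw [rankCompletion, ← hA.submatrix_id_eq_blockColumns, ← hrow]
  exact eq_mul_inv_mul_of_rank_le_card A σ σ hσ hrank

end RankCompletion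

section ForcedBlock

variable {V W n : Type*} [Fintype V] [Fintype W] [Fintype n] [DecidableEq n]
  {G : SimpleGraph V} {H : SimpleGraph W} {s : n → W} {N : Matrix n n (ZMod 2)}

/-- The invertible matrix `N` is the principal block on `s` of every graph matrix of `H` over `𝔽₂`
whose rank is at most the size of `N`. -/
structure IsForcedBlock (H : SimpleGraph W) (s : n → W) (N : Matrix n n (ZMod 2)) : Prop where
  isUnit : IsUnit N
  submatrix_eq (A : Matrix W W (ZMod 2)) :
    IsGraphMatrix (ZMod 2) H A → A.rank ≤ Fintype.card n → A.submatrix s s = N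

theorem IsForcedBlock.minRank_le_card_iff (hN : IsForcedBlock H s N) (f : H ↪g G) :
    minRank (ZMod 2) G ≤ Fintype.card n ↔
      IsGraphMatrix (ZMod 2) G (rankCompletion G (f ∘ s) N) := by
  refine ⟨fun hG => ?_, fun hG => (minRank_le_rank hG).trans (rank_rankCompletion_le _ _ _)⟩
  obtain ⟨A, hA, hrank⟩ := exists_isGraphMatrix_rank_eq_minRank (ZMod 2) G
  have hblock : A.submatrix (f ∘ s) (f ∘ s) = N :=
    hN.submatrix_eq _ (hA.submatrix f) ((rank_submatrix_le A f f).trans (hrank.trans_le hG))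
  have hcompl := hA.eq_rankCompletion (f ∘ s) (hblock ▸ hN.isUnit) (hrank.trans_le hG)
  rw [hblock] at hcompl
  rwa [← hcompl]

theorem IsForcedBlock.card_le_card_add_two [DecidableEq V] (hN : IsForcedBlock H s N)
    (hG : MemForbRel (ZMod 2) (Fintype.card n + 1) H G) :
    Fintype.card V ≤ Fintype.card W + 2 := by
  obtain ⟨hmr, f, hdel⟩ := hG
  by_contra! hcard
  refine absurd ((hN.minRank_le_card_iff f).2 ?_) (Nat.not_le_of_lt hmr)
  refine isGraphMatrix_of_forall_exists_deleteVert fun i j => ?_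
  obtain ⟨v, hvf, hi, hj⟩ := exists_notMem_range_ne_ne f hcard i j
  obtain ⟨g, hg⟩ := exists_embedding_deleteVert f hvf
  let ι : deleteVert G v ↪g G := SimpleGraph.Embedding.comap (.subtype _) G
  have hfg : f ∘ s = ι ∘ g ∘ s := funext fun a => (hg (s a)).symm
  have hrestrict := rankCompletion_submatrix ι (g ∘ s) N
  rw [← hfg] at hrestrict
  exact ⟨v, hi, hj, hrestrict ▸ (hN.minRank_le_card_iff g).1 (Nat.le_of_succ_le_succ (hdel v hvf))⟩

end ForcedBlock

section DoubledBlock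

variable {n : Type*} [Fintype n] [DecidableEq n] {B : Matrix n n (ZMod 2)}

theorem IsGraphMatrix.eq_fromBlocks_of_rank_le {H : SimpleGraph (n ⊕ n)} (hB : IsUnit B)
    (hdiag : ∀ i, B⁻¹ i i = 1) (hH : IsGraphMatrix (ZMod 2) H (fromBlocks B B B B))
    {A : Matrix (n ⊕ n) (n ⊕ n) (ZMod 2)} (hA : IsGraphMatrix (ZMod 2) H A)
    (hrank : A.rank ≤ Fintype.card n) : A = fromBlocks B B B B := by
  obtain ⟨d, rfl⟩ := hA.exists_eq_add_diagonal hH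
  suffices d = 0 by simp [this]
  set A := fromBlocks B B B B + diagonal d with hAd
  have h₁₁ : A.submatrix Sum.inl Sum.inl = B + diagonal (d ∘ Sum.inl) := by
    ext i j
    simp [hAd, diagonal_apply]
  have h₁₂ : A.submatrix Sum.inl Sum.inr = B := by
    ext i j
    simp [hAd]
  have h₂₁ : A.submatrix Sum.inr Sum.inl = B := by
    ext i j
    simp [hAd]
  have h₂₂ : A.submatrix Sum.inr Sum.inr = B + diagonal (d ∘ Sum.inr) := by
    ext i j
    simp [hAd, diagonal_apply]
  have hfactor := eq_mul_inv_mul_of_rank_le_card A Sum.inl Sum.inr (h₁₂ ▸ hB) hrank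
  have hblock : B = (B + diagonal (d ∘ Sum.inr)) * B⁻¹ * (B + diagonal (d ∘ Sum.inl)) := by
    rw [← h₁₁, ← h₂₂]
    conv_lhs => rw [← h₂₁, hfactor, h₁₂]
    rfl
  rw [add_mul_inv_mul_add hB, left_eq_add] at hblock
  have hdiagonal (i : n) : d (.inl i) + (d (.inr i) + d (.inr i) * d (.inl i)) = 0 := by
    simpa [hdiag] using congrFun₂ hblock i i
  have eq_zero_of_add_add_mul : ∀ x y : ZMod 2, x + (y + y * x) = 0 → x = 0 ∧ y = 0 := by decide
  exact funext <| Sum.rec (fun i => (eq_zero_of_add_add_mul _ _ (hdiagonal i)).1)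
    fun i => (eq_zero_of_add_add_mul _ _ (hdiagonal i)).2

theorem isForcedBlock_of_fromBlocks {W : Type*} [Fintype W] {H : SimpleGraph W}
    {K : SimpleGraph (n ⊕ n)}
    (hB : IsUnit B) (hdiag : ∀ i, B⁻¹ i i = 1)
    (hK : IsGraphMatrix (ZMod 2) K (fromBlocks B B B B)) (e : K ↪g H) :
    IsForcedBlock H (e ∘ Sum.inl) B where
  isUnit := hB
  submatrix_eq A hA hrank := congrArg toBlocks₁₁ <|
    hK.eq_fromBlocks_of_rank_le hB hdiag (hA.submatrix e) ((rank_submatrix_le A e e).trans hrank)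

end DoubledBlock

theorem card_le_eight_of_memForbRel_threeK2 {V : Type*} [Fintype V] [DecidableEq V]
    {G : SimpleGraph V} (hG : MemForbRel (ZMod 2) 4 threeK2 G) : Fintype.card V ≤ 8 := by
  let e : Fin 3 ⊕ Fin 3 ↪ Fin 6 := ⟨Sum.elim ![0, 2, 4] ![1, 3, 5], by decide⟩
  have hgraph : IsGraphMatrix (ZMod 2) (threeK2.comap e) (fromBlocks 1 1 1 1) := by
    refine ⟨by decide, ?_⟩
    rintro (i | i) (j | j) <;> fin_cases i <;> fin_cases j <;> simp [threeK2, e]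
  exact (isForcedBlock_of_fromBlocks isUnit_one (by simp) hgraph
    (.comap e threeK2)).card_le_card_add_two hG

theorem card_le_eight_of_memForbRel_P3joinP3 {V : Type*} [Fintype V] [DecidableEq V]
    {G : SimpleGraph V} (hG : MemForbRel (ZMod 2) 4 P3joinP3 G) : Fintype.card V ≤ 8 := by
  let B : Matrix (Fin 3) (Fin 3) (ZMod 2) := !![0, 1, 1; 1, 0, 1; 1, 1, 1]
  let e : Fin 3 ⊕ Fin 3 ↪ Fin 6 := ⟨Sum.elim ![0, 3, 1] ![2, 5, 4], by decide⟩
  have hBinv : B * !![1, 0, 1; 0, 1, 1; 1, 1, 1] = 1 := by decide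
  have hdiag : ∀ i, B⁻¹ i i = 1 := by rw [inv_eq_right_inv hBinv]; decide
  have hgraph : IsGraphMatrix (ZMod 2) (P3joinP3.comap e) (fromBlocks B B B B) := by
    refine ⟨by decide, ?_⟩
    rintro (i | i) (j | j) <;> fin_cases i <;> fin_cases j <;> simp [P3joinP3, e, B]
  exact (isForcedBlock_of_fromBlocks (.of_mul_eq_one _ hBinv) hdiag hgraph
    (.comap e P3joinP3)).card_le_card_add_two hG

/-- If `G ∈ F₄(F₂, 3K₂)` or `G ∈ F₄(F₂, P₃ ∨ P₃)`, then `G` has at most 8 vertices. -/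
theorem card_le_eight_of_forbRel_threeK2_or_P3joinP3 {V : Type*} [Fintype V] [DecidableEq V]
    (G : SimpleGraph V)
    (h : MemForbRel (ZMod 2) 4 threeK2 G ∨ MemForbRel (ZMod 2) 4 P3joinP3 G) :
    Fintype.card V ≤ 8 := by
  exact h.elim card_le_eight_of_memForbRel_threeK2 card_le_eight_of_memForbRel_P3joinP3
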